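/- Let |λ,s⟩ be a charged ℓ-partition with first and second good vertical e-strips X₁ > X₂ (disjoint). If σ₁ ≥ 1 copies of X₁ have been added (each addition shifting to the new first good strip position), then the second good vertical e-strip of the resulting charged multipartition is addable. -/

import Mathlib

/-!
The proof works with the abacus of a charged multipartition: the boxes of `W(λ,s)` in component `r`
are determined by their contents, so `W(λ,s)` is a set of beads `(r, x)` (runner `r`, position `x`),
and an admissible vertical `e`-strip is a run of beads at consecutive positions whose runners weakly
increase with the position. The first good strip is the strip with highest top position and,
among the strips reaching at least as low, the one with pointwise smallest runners
(`Good.le_of_chain`). Adding a strip moves each of its beads one position up.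

Let `ν` be the last intermediate multipartition, `X` its first good strip (top position `p`, runners
`j`), and `μ = ν + X`. The key fact (`Good.top_le`) is that a run of beads of `μ` reaching down to
position `p - e + 1` must start at a position `≤ p`: if it met the shifted strip, then just below
its lowest meeting point it would consist of beads of `ν` on runners smaller than those of `X`, and
if it never met it, it would be a run in `ν` with a higher top than `X`.

Let `X₁` and `Y` be the first and second good strips of `μ`. The top of `X₁` is at least `p + 1`
because the shifted `X` is a strip of `μ`, and `X₁` has to meet the shifted `X`. At a
meeting point `Y` (if it reached that high) would lie on a strictly larger runner, and following
`Y` down to there and then `X` would contradict the key fact; hence the top of `Y` is at most `p`.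
If `Y` is not addable, maximality of `Y` forces the box `γ` above some box `y` of `Y` to lie in `X₁`.
Following `X₁` down to `γ` and then `Y` from `y` on contradicts the key fact again.
-/


open scoped Classical

/-- A box `(a, b, j)`: row `a`, column `b` (both 0-indexed), component `j` (0-indexed,
so `j < ℓ`). -/
abbrev Box := ℕ × ℕ × ℕ

/-- The content of a box: `c(a,b,j) = b - a + s_j`. -/
def content (s : ℕ → ℤ) (γ : Box) : ℤ := (γ.2.1 : ℤ) - (γ.1 : ℤ) + s γ.2.2

/-- An `ℓ`-partition: a family of `ℓ` weakly decreasing eventually-zero sequences,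
`lam j a` being the length of row `a` of component `j`. -/
def IsMultipartition (ℓ : ℕ) (lam : ℕ → ℕ → ℕ) : Prop :=
  ∀ j < ℓ, (∀ a, lam j (a + 1) ≤ lam j a) ∧ ∃ N, ∀ a ≥ N, lam j a = 0

/-- `W(λ,s)`: the boxes directly to the right of `λ` (the first box absent from each row
of each component, including column-one boxes of empty rows). -/
def InW (ℓ : ℕ) (lam : ℕ → ℕ → ℕ) (γ : Box) : Prop :=
  γ.2.2 < ℓ ∧ γ.2.1 = lam γ.2.2 γ.1

/-- An admissible vertical `e`-strip: a sequence of `e` boxes with no horizontal domino,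
consecutive decreasing contents, and weakly decreasing component indices. -/
def IsAdmissible (e : ℕ) (s : ℕ → ℤ) (X : Fin e → Box) : Prop :=
  (∀ (i : ℕ) (h : i + 1 < e),
      ¬((X ⟨i + 1, h⟩).1 = (X ⟨i, Nat.lt_of_succ_lt h⟩).1 ∧
        (X ⟨i + 1, h⟩).2.2 = (X ⟨i, Nat.lt_of_succ_lt h⟩).2.2)) ∧
  (∀ (i : ℕ) (h : i + 1 < e),
      content s (X ⟨i, Nat.lt_of_succ_lt h⟩) = content s (X ⟨i + 1, h⟩) + 1) ∧
  (∀ i i' : Fin e, i < i' → (X i').2.2 ≤ (X i).2.2)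

/-- An admissible vertical `e`-strip of the charged `ℓ`-partition `|λ,s⟩`. -/
def IsStrip (e ℓ : ℕ) (lam : ℕ → ℕ → ℕ) (s : ℕ → ℤ) (X : Fin e → Box) : Prop :=
  IsAdmissible e s X ∧ ∀ i, InW ℓ lam (X i)

/-- The order on boxes: `γ > γ'` iff `c(γ) > c(γ')`, or `c(γ) = c(γ')` and `j < j'`. -/
def boxGT (s : ℕ → ℤ) (γ γ' : Box) : Prop :=
  content s γ' < content s γ ∨ (content s γ' = content s γ ∧ γ.2.2 < γ'.2.2)

/-- The induced lexicographic order on `e`-tuples of boxes. -/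
def lexGT (e : ℕ) (s : ℕ → ℤ) (X Y : Fin e → Box) : Prop :=
  ∃ i : Fin e, (∀ i' : Fin e, i' < i → X i' = Y i') ∧ boxGT s (X i) (Y i)

/-- The result of adding the strip `X` to `λ`: each row meeting a box of `X` at its right
end grows by one. -/
noncomputable def addStrip (lam : ℕ → ℕ → ℕ) {e : ℕ} (X : Fin e → Box) : ℕ → ℕ → ℕ :=
  fun j a => lam j a + (if ∃ i, X i = (a, lam j a, j) then 1 else 0)

/-- The strip `X` is addable to `λ`: its boxes are distinct, disjoint from `λ` (automatic
for boxes of `W(λ,s)`), and adding them yields again an `ℓ`-partition. -/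
def IsAddable (e ℓ : ℕ) (lam : ℕ → ℕ → ℕ) (X : Fin e → Box) : Prop :=
  (∀ i i' : Fin e, i ≠ i' → X i ≠ X i') ∧ IsMultipartition ℓ (addStrip lam X)

/-- `X` is the first good vertical `e`-strip of `|λ,s⟩`: the greatest admissible vertical
`e`-strip of `|λ,s⟩` for the lexicographic order. -/
def IsFirstGood (e ℓ : ℕ) (lam : ℕ → ℕ → ℕ) (s : ℕ → ℤ) (X : Fin e → Box) : Prop :=
  IsStrip e ℓ lam s X ∧ ∀ Y, IsStrip e ℓ lam s Y → Y ≠ X → lexGT e s X Y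

/-- `X₂` is the second good vertical `e`-strip of `|λ,s⟩`: the greatest admissible
vertical `e`-strip disjoint from, and smaller than, the first good strip `X₁`. -/
def IsSecondGood (e ℓ : ℕ) (lam : ℕ → ℕ → ℕ) (s : ℕ → ℤ) (X₂ : Fin e → Box) : Prop :=
  ∃ X₁, IsFirstGood e ℓ lam s X₁ ∧
    IsStrip e ℓ lam s X₂ ∧ (∀ i i' : Fin e, X₂ i ≠ X₁ i') ∧ lexGT e s X₁ X₂ ∧
    ∀ Y, IsStrip e ℓ lam s Y → (∀ i i' : Fin e, Y i ≠ X₁ i') → lexGT e s X₁ Y →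
      Y ≠ X₂ → lexGT e s X₂ Y

/-- One step of the recursive addition: `μ` is obtained from `λ` by adding its first good
vertical `e`-strip. -/
def AddFirstGood (e ℓ : ℕ) (s : ℕ → ℤ) (lam mu : ℕ → ℕ → ℕ) : Prop :=
  ∃ X, IsFirstGood e ℓ lam s X ∧ mu = addStrip lam X

/-! ### Runs of beads on an abacus -/

/-- A run of beads of `N` at all positions from `a` down to `b`, the one at position `x` on
runner `t x`; runners weakly decrease when going down. Values of `t` outside `[b, a]` are junk. -/
def Chain (N : ℕ → ℤ → Prop) (t : ℤ → ℕ) (a b : ℤ) : Prop :=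
  (∀ x, b ≤ x → x ≤ a → N (t x) x) ∧ ∀ x, b ≤ x → x < a → t x ≤ t (x + 1)

/-- The abacus version of the first good strip: a run of length `E` with highest top position `p`
and, among those, lexicographically smallest runners read from the top. -/
def Good (N : ℕ → ℤ → Prop) (E p : ℤ) (j : ℤ → ℕ) : Prop :=
  Chain N j p (p - E + 1) ∧ (∀ a t, Chain N t a (a - E + 1) → a ≤ p) ∧
    ∀ t, Chain N t p (p - E + 1) → ∀ x, p - E + 1 ≤ x → x ≤ p →
      (∀ z, x < z → z ≤ p → t z = j z) → j x ≤ t x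

/-- The first good strip is pointwise minimal among all runs reaching as low as it does. -/
lemma Good.le_of_chain {N : ℕ → ℤ → Prop} {E p : ℤ} {j : ℤ → ℕ} (h : Good N E p j)
    {t : ℤ → ℕ} {a : ℤ} (ha : a ≤ p) (ht : Chain N t a (p - E + 1)) {x : ℤ}
    (hx : p - E + 1 ≤ x) (hxa : x ≤ a) : j x ≤ t x := by
  by_contra hlt
  obtain ⟨⟨h1, h2⟩, -, h3⟩ := h
  obtain ⟨t1, t2⟩ := ht
  -- Follow `j` strictly above `x` and `t` from `x` on.
  have key := h3 (fun z => if z ≤ x then t z else j z) ⟨?_, ?_⟩ x hx (by omega) ?_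
  · simp at key; omega
  · intro z hz hz'
    by_cases hzx : z ≤ x
    · simpa [hzx] using t1 z hz (by omega)
    · simpa [hzx] using h1 z hz (by omega)
  · intro z hz hz'
    by_cases hzx : z ≤ x
    · by_cases hzx' : z + 1 ≤ x
      · simpa [hzx, hzx'] using t2 z hz (by omega)
      · obtain rfl : z = x := by omega
        have := h2 z hz hz'
        simp; omega
    · have : ¬ z + 1 ≤ x := by omega
      simpa [hzx, this] using h2 z hz hz'
  · intro z hz _
    have : ¬ z ≤ x := by omega
    simp [this]

/-- The first good strip is closed under passing to the box directly above. -/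
lemma Good.closed {N : ℕ → ℤ → Prop} {E p : ℤ} {j : ℤ → ℕ} (h : Good N E p j)
    {x : ℤ} (hx : p - E + 1 ≤ x) (hxp : x ≤ p) (hb : N (j x) (x + 1)) :
    x + 1 ≤ p ∧ j (x + 1) = j x := by
  have hc : ∀ b, p - E + 1 ≤ b → b ≤ x →
      Chain N (fun z => if z = x + 1 then j x else j z) (x + 1) b := by
    intro b hb1 hb2
    refine ⟨fun z hz hz' => ?_, fun z hz hz' => ?_⟩
    · by_cases hzx : z = x + 1
      · simpa [hzx] using hb
      · simpa [hzx] using h.1.1 z (by omega) (by omega)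
    · by_cases hzx : z = x
      · simp [hzx]
      · have h1 : z ≠ x + 1 := by omega
        simpa [hzx, h1] using h.1.2 z (by omega) (by omega)
  rcases eq_or_lt_of_le hxp with rfl | hlt
  · exfalso
    by_cases hE : x + 1 - E + 1 ≤ x
    · have := h.2.1 _ _ (hc (x + 1 - E + 1) (by omega) hE)
      omega
    · have hE1 : x + 1 - E + 1 = x + 1 := by omega
      have : x + 1 ≤ x := h.2.1 (x + 1) (fun _ => j x) ⟨fun z hz hz' => by
        obtain rfl : z = x + 1 := by omega
        exact hb, fun z hz hz' => by omega⟩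
      omega
  · have h1 := h.le_of_chain (a := x + 1) (by omega) (hc _ le_rfl hx) (x := x + 1) (by omega) le_rfl
    have h2 := h.1.2 x hx hlt
    simp at h1
    exact ⟨by omega, by omega⟩

/-- `M` is the abacus obtained from `N` by moving each bead `(j x, x)` with `x ∈ [p - E + 1, p]`
one position up. -/
def Moved (N M : ℕ → ℤ → Prop) (E p : ℤ) (j : ℤ → ℕ) : Prop :=
  ∀ r x, M r x ↔ (N r x ∧ ¬(p - E + 1 ≤ x ∧ x ≤ p ∧ j x = r)) ∨
    (p - E + 1 ≤ x - 1 ∧ x - 1 ≤ p ∧ j (x - 1) = r)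

/-- Key fact: after moving the first good strip, a run reaching down to the old bottom position
`p - E + 1` starts no higher than the old top position `p`. The run may switch from the new abacus
`M` to the old one `N` below a position `w` where it avoids the shifted strip. -/
lemma Good.top_le {N M : ℕ → ℤ → Prop} {E p : ℤ} {j : ℤ → ℕ} (h : Good N E p j)
    (hM : Moved N M E p j) {t : ℤ → ℕ} {a b w : ℤ} (hb : b ≤ p - E + 1) (hbw : b ≤ w)
    (hmono : ∀ x, b ≤ x → x < a → t x ≤ t (x + 1))
    (hm : ∀ x, w ≤ x → x ≤ a → M (t x) x) (hn : ∀ x, b ≤ x → x < w → N (t x) x)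
    (hw : ¬(p - E + 1 ≤ w - 1 ∧ w - 1 ≤ p ∧ j (w - 1) = t w)) : a ≤ p := by
  -- Going up from `w`, the run never meets the shifted strip, so it stays in `N`.
  have main : ∀ x, w ≤ x → x ≤ a →
      ((∀ z, b ≤ z → z ≤ x → N (t z) z) ∧ ¬(p - E + 1 ≤ x - 1 ∧ x - 1 ≤ p ∧ j (x - 1) = t x)) := by
    intro x hx
    induction x, hx using Int.leInduction with
    | base =>
      intro hwa
      refine ⟨fun z hz hz' => ?_, hw⟩
      rcases eq_or_lt_of_le hz' with rfl | hlt
      · rcases (hM _ _).1 (hm z le_rfl hwa) with h1 | h1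
        · exact h1.1
        · exact absurd h1 hw
      · exact hn z hz hlt
    | succ x hx ih =>
      intro hxa
      obtain ⟨i1, i2⟩ := ih (by omega)
      have hnot : ¬(p - E + 1 ≤ x + 1 - 1 ∧ x + 1 - 1 ≤ p ∧ j (x + 1 - 1) = t (x + 1)) := by
        rw [add_sub_cancel_right]
        rintro ⟨g1, g2, g3⟩
        have hle := h.le_of_chain g2 (t := t) (a := x)
          ⟨fun z hz hz' => i1 z (by omega) hz', fun z hz hz' => hmono z (by omega) (by omega)⟩
          g1 le_rfl
        have hle2 := hmono x (by omega) (by omega)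
        have heq : j x = t x := by omega
        rcases (hM _ _).1 (hm x hx (by omega)) with h1 | h1
        · exact h1.2 ⟨g1, g2, heq⟩
        · exact i2 h1
      refine ⟨fun z hz hz' => ?_, hnot⟩
      rcases eq_or_lt_of_le hz' with rfl | hlt
      · rcases (hM _ _).1 (hm (x + 1) (by omega) hxa) with h1 | h1
        · exact h1.1
        · exact absurd h1 hnot
      · exact i1 z hz (by omega)
  by_contra hap
  have hN : ∀ z, b ≤ z → z ≤ a → N (t z) z := by
    by_cases hwa : w ≤ a
    · exact (main a hwa le_rfl).1
    · exact fun z hz hz' => hn z hz (by omega)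
  exact hap (h.2.1 a t ⟨fun z hz hz' => hN z (by omega) hz', fun z hz hz' => hmono z (by omega) hz'⟩)

/-- After moving the first good strip `j`, no box of a strip `y` disjoint from the new first good
strip `j₁` lies directly below a box of `j₁`. -/
lemma Good.not_below {N M : ℕ → ℤ → Prop} {E p p₁ c x : ℤ} {j j₁ y : ℤ → ℕ}
    (h : Good N E p j) (hM : Moved N M E p j) (h₁ : Good M E p₁ j₁) (hy : Chain M y c (c - E + 1))
    (hdis : ∀ z, c - E + 1 ≤ z → z ≤ c → p₁ - E + 1 ≤ z → z ≤ p₁ → y z ≠ j₁ z)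
    (hxc : x ≤ c) (hx₁ : p₁ - E + 1 ≤ x + 1)
    (heq : j₁ (x + 1) = y x) : False := by
  have hp₁ : p + 1 ≤ p₁ := by
    refine h₁.2.1 (p + 1) (fun z => j (z - 1)) ⟨fun z hz hz' => ?_, fun z hz hz' => ?_⟩
    · exact (hM _ _).2 (Or.inr ⟨by omega, by omega, rfl⟩)
    · have := h.1.2 (z - 1) (by omega) (by omega)
      rwa [show z - 1 + 1 = z + 1 - 1 by ring] at this
  have hcp₁ : c ≤ p₁ := h₁.2.1 c y hy
  have hmeet : ∃ z, p₁ - E + 1 ≤ z ∧ z ≤ p₁ ∧ p - E + 1 ≤ z - 1 ∧ z - 1 ≤ p ∧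
      j (z - 1) = j₁ z := by
    by_contra hno
    have := h.2.1 p₁ j₁ ⟨fun z hz hz' => ?_, h₁.1.2⟩
    · omega
    · rcases (hM _ _).1 (h₁.1.1 z hz hz') with g | g
      · exact g.1
      · exact absurd ⟨z, hz, hz', g⟩ hno
  have hcp : c ≤ p := by
    by_contra hcp
    obtain ⟨z, z1, z2, z3, z4, z5⟩ := hmeet
    have hle : j₁ z ≤ y z := h₁.le_of_chain hcp₁
      ⟨fun u hu hu' => hy.1 u (by omega) hu', fun u hu hu' => hy.2 u (by omega) hu'⟩ z1 (by omega)
    have hne := hdis z (by omega) (by omega) z1 z2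
    -- Follow `y` down to `z`, then the old strip `j`.
    refine hcp (h.top_le hM (t := fun u => if z ≤ u then y u else j u) (a := c)
      (b := p - E + 1) (w := z) le_rfl (by omega) ?_ ?_ ?_ ?_)
    · intro u hu hu'
      by_cases g : z ≤ u
      · have g' : z ≤ u + 1 := by omega
        simpa [g, g'] using hy.2 u (by omega) hu'
      · by_cases g' : z ≤ u + 1
        · obtain rfl : z = u + 1 := by omega
          rw [add_sub_cancel_right] at z5
          simp only [g, le_refl, if_true, if_false]
          omega
        · simpa [g, g'] using h.1.2 u hu (by omega)
    · intro u hu hu'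
      simpa [hu] using hy.1 u (by omega) hu'
    · intro u hu hu'
      have g : ¬ z ≤ u := by omega
      simpa [g] using h.1.1 u hu (by omega)
    · rintro ⟨-, -, g⟩
      simp only [le_refl, if_true] at g
      omega
  -- Follow `j₁` down to `x + 1`, then `y`.
  have := h.top_le hM (t := fun u => if x + 1 ≤ u then j₁ u else y u) (a := p₁)
      (b := c - E + 1) (w := c - E + 1) (by omega) le_rfl ?_ ?_ (fun u _ _ => by omega)
      (fun g => by omega)
  · omega
  · intro u hu hu'
    by_cases g : x + 1 ≤ u
    · have g' : x + 1 ≤ u + 1 := by omega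
      simpa [g, g'] using h₁.1.2 u (by omega) hu'
    · by_cases g' : x ≤ u
      · obtain rfl : x = u := by omega
        simp [heq]
      · simpa [g, g'] using hy.2 u hu (by omega)
  · intro u hu hu'
    by_cases g : x + 1 ≤ u
    · simpa [g] using h₁.1.1 u (by omega) hu'
    · simpa [g] using hy.1 u hu (by omega)

/-! ### The abacus of a charged multipartition -/

/-- The abacus of `|λ,s⟩`: a bead on runner `r` at each content of a box of `W(λ,s)` in
component `r`. -/
def Bead (ℓ : ℕ) (lam : ℕ → ℕ → ℕ) (s : ℕ → ℤ) (r : ℕ) (x : ℤ) : Prop :=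
  r < ℓ ∧ ∃ a : ℕ, (lam r a : ℤ) - a + s r = x

/-- The tuple `X` has contents `c, c - 1, …`, its box of content `x` lying in component `t x`. -/
def Desc {e : ℕ} (s : ℕ → ℤ) (X : Fin e → Box) (c : ℤ) (t : ℤ → ℕ) : Prop :=
  ∀ i : Fin e, (X i).2.2 = t (c - (i : ℕ)) ∧ content s (X i) = c - (i : ℕ)

lemma IsMultipartition.row_inj {ℓ : ℕ} {lam : ℕ → ℕ → ℕ} (h : IsMultipartition ℓ lam)
    {r : ℕ} (hr : r < ℓ) {a b : ℕ} (hab : (lam r a : ℤ) - a = lam r b - b) : a = b := by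
  have hanti : Antitone (lam r) := antitone_nat_of_succ_le (h r hr).1
  rcases lt_trichotomy a b with g | g | g
  · have := hanti g.le; omega
  · exact g
  · have := hanti g.le; omega

lemma box_ext {ℓ : ℕ} {lam : ℕ → ℕ → ℕ} {s : ℕ → ℤ} (h : IsMultipartition ℓ lam)
    {γ δ : Box} (hγ : InW ℓ lam γ) (hδ : InW ℓ lam δ) (hr : γ.2.2 = δ.2.2)
    (hc : content s γ = content s δ) : γ = δ := by
  obtain ⟨a, b, r⟩ := γ
  obtain ⟨a', b', r'⟩ := δ
  simp only [InW, content] at *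
  obtain ⟨h1, rfl⟩ := hγ
  obtain ⟨h2, rfl⟩ := hδ
  subst hr
  obtain rfl := h.row_inj h1 (show (lam r a : ℤ) - a = lam r a' - a' by omega)
  rfl

/-- Every strip is a run of beads. -/
lemma exists_desc {e ℓ : ℕ} (he : 2 ≤ e) {lam : ℕ → ℕ → ℕ} {s : ℕ → ℤ} {X : Fin e → Box}
    (hX : IsStrip e ℓ lam s X) :
    ∃ c t, Desc s X c t ∧ Chain (Bead ℓ lam s) t c (c - e + 1) := by
  obtain ⟨⟨-, h2, h3⟩, h4⟩ := hX
  let c := content s (X ⟨0, by omega⟩)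
  have hcont : ∀ i (hi : i < e), content s (X ⟨i, hi⟩) = c - i := by
    intro i
    induction i with
    | zero => intro hi; simp [c]
    | succ n ih =>
      intro hi
      have := h2 n hi
      have := ih (by omega)
      push_cast; omega
  let t : ℤ → ℕ := fun x => if h : (c - x).toNat < e then (X ⟨(c - x).toNat, h⟩).2.2 else 0
  have ht : ∀ i (hi : i < e), t (c - i) = (X ⟨i, hi⟩).2.2 := by
    intro i hi
    simp [t, hi]
  refine ⟨c, t, fun i => ⟨(ht i i.2).symm, hcont i i.2⟩, fun x hx hx' => ?_, fun x hx hx' => ?_⟩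
  · obtain ⟨i, rfl⟩ : ∃ i : ℕ, x = c - i := ⟨(c - x).toNat, by omega⟩
    have hi : i < e := by omega
    rw [ht i hi]
    refine ⟨(h4 ⟨i, hi⟩).1, (X ⟨i, hi⟩).1, ?_⟩
    rw [← (h4 ⟨i, hi⟩).2]
    exact hcont i hi
  · obtain ⟨i, rfl⟩ : ∃ i : ℕ, x = c - (i + 1 : ℕ) := ⟨(c - x - 1).toNat, by omega⟩
    have hi : i + 1 < e := by omega
    rw [ht (i + 1) hi, show c - ((i + 1 : ℕ) : ℤ) + 1 = c - (i : ℕ) by push_cast; ring,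
      ht i (by omega)]
    exact h3 ⟨i, by omega⟩ ⟨i + 1, hi⟩ (by simp [Fin.lt_def])

/-- Every run of `e` beads is a strip. -/
lemma exists_strip {e ℓ : ℕ} {lam : ℕ → ℕ → ℕ} {s : ℕ → ℤ} {c : ℤ} {t : ℤ → ℕ}
    (h : Chain (Bead ℓ lam s) t c (c - e + 1)) :
    ∃ X : Fin e → Box, IsStrip e ℓ lam s X ∧ Desc s X c t := by
  have hb : ∀ i : Fin e, Bead ℓ lam s (t (c - (i : ℕ))) (c - (i : ℕ)) := fun i =>
    h.1 _ (by have := i.2; omega) (by omega)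
  choose hl a ha using hb
  let X : Fin e → Box := fun i => (a i, lam (t (c - (i : ℕ))) (a i), t (c - (i : ℕ)))
  have hd : Desc s X c t := fun i => ⟨rfl, ha i⟩
  have hmono : ∀ n i : ℕ, i + n < e → t (c - (i + n : ℕ)) ≤ t (c - i) := by
    intro n i
    induction n with
    | zero => intro _; simp
    | succ n ih =>
      intro hn
      have h1 := h.2 (c - (i + (n + 1) : ℕ)) (by push_cast; omega) (by push_cast; omega)
      rw [show c - ((i + (n + 1) : ℕ) : ℤ) + 1 = c - ((i + n : ℕ) : ℤ) by push_cast; ring] at h1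
      exact h1.trans (ih (by omega))
  refine ⟨X, ⟨⟨?_, ?_, ?_⟩, fun i => ⟨hl i, rfl⟩⟩, hd⟩
  · -- Two beads in the same row of the same component are the same bead.
    rintro i hi ⟨g1, g2⟩
    have e1 := (hd ⟨i + 1, hi⟩).2
    have e2 := (hd ⟨i, by omega⟩).2
    have : X ⟨i + 1, hi⟩ = X ⟨i, by omega⟩ := by
      refine Prod.ext g1 (Prod.ext ?_ g2)
      simp only [X] at g1 g2 ⊢
      rw [g1, g2]
    rw [this, e2] at e1
    push_cast at e1
    omega
  · intro i hi
    have e1 := (hd ⟨i + 1, hi⟩).2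
    have e2 := (hd ⟨i, by omega⟩).2
    rw [e1, e2]; push_cast; ring
  · intro i i' hii
    have := hmono (i' - i : ℕ) i (by have := i'.2; have := Fin.lt_def.1 hii; omega)
    rwa [show (i : ℕ) + (i' - i) = i' by have := Fin.lt_def.1 hii; omega] at this

/-- The lexicographic order on strips in terms of top positions and runners. -/
lemma lex_desc {e : ℕ} (he : 2 ≤ e) {s : ℕ → ℤ} {X Y : Fin e → Box} {p c : ℤ} {j t : ℤ → ℕ}
    (hX : Desc s X p j) (hY : Desc s Y c t) (h : Y ≠ X → lexGT e s X Y) :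
    c ≤ p ∧ (c = p → ∀ x, p - e + 1 ≤ x → x ≤ p → (∀ z, x < z → z ≤ p → t z = j z) →
      j x ≤ t x) := by
  by_cases hYX : Y = X
  · subst hYX
    have h0 := (hX ⟨0, by omega⟩).2
    have h0' := (hY ⟨0, by omega⟩).2
    have hcp : c = p := by simp at h0 h0'; omega
    subst hcp
    refine ⟨le_rfl, fun _ x hx hx' _ => ?_⟩
    obtain ⟨i, rfl⟩ : ∃ i : ℕ, x = c - i := ⟨(c - x).toNat, by omega⟩
    exact ((hX ⟨i, by omega⟩).1.symm.trans (hY ⟨i, by omega⟩).1).le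
  · obtain ⟨i, hi1, hi2⟩ := h hYX
    have hcX := (hX i).2
    have hcY := (hY i).2
    have hle : c ≤ p := by rcases hi2 with g | g <;> omega
    refine ⟨hle, fun hcp x hx hx' hz => ?_⟩
    subst hcp
    obtain ⟨k, rfl⟩ : ∃ k : ℕ, x = c - k := ⟨(c - x).toNat, by omega⟩
    have hk : k < e := by omega
    have hlt : j (c - (i : ℕ)) < t (c - (i : ℕ)) := by
      rw [← (hX i).1, ← (hY i).1]
      rcases hi2 with g | g
      · omega
      · exact g.2
    rcases lt_trichotomy k i with g | g | g
    · have := hi1 ⟨k, hk⟩ g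
      have e1 := (hX ⟨k, hk⟩).1
      have e2 := (hY ⟨k, hk⟩).1
      rw [← this] at e2
      exact (e1.symm.trans e2).le
    · subst g; exact hlt.le
    · have := hz (c - (i : ℕ)) (by omega) (by omega)
      omega

lemma good_of_firstGood {e ℓ : ℕ} (he : 2 ≤ e) {lam : ℕ → ℕ → ℕ} {s : ℕ → ℤ}
    {X : Fin e → Box} (hX : IsFirstGood e ℓ lam s X) :
    ∃ p j, Desc s X p j ∧ Good (Bead ℓ lam s) e p j := by
  obtain ⟨p, j, hd, hc⟩ := exists_desc he hX.1
  refine ⟨p, j, hd, hc, fun a t ht => ?_, fun t ht => ?_⟩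
  · obtain ⟨Z, hZ, hZd⟩ := exists_strip ht
    exact (lex_desc he hd hZd (hX.2 Z hZ)).1
  · obtain ⟨Z, hZ, hZd⟩ := exists_strip ht
    exact (lex_desc he hd hZd (hX.2 Z hZ)).2 rfl

/-- A strip is addable as soon as it contains every box of `W(λ,s)` lying directly above one of
its boxes. -/
lemma isAddable_of_closed {e ℓ : ℕ} {lam : ℕ → ℕ → ℕ} {s : ℕ → ℤ}
    (hlam : IsMultipartition ℓ lam) {X : Fin e → Box} (hX : IsStrip e ℓ lam s X)
    {p : ℤ} {j : ℤ → ℕ} (hd : Desc s X p j)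
    (hcl : ∀ x, p - e + 1 ≤ x → x ≤ p → Bead ℓ lam s (j x) (x + 1) →
      x + 1 ≤ p ∧ j (x + 1) = j x) : IsAddable e ℓ lam X := by
  refine ⟨fun i i' hne heq => ?_, fun r hr => ⟨fun a => ?_, ?_⟩⟩
  · have h1 := (hd i).2
    have h2 := (hd i').2
    rw [heq] at h1
    exact hne (Fin.ext (by omega))
  · have hle := (hlam r hr).1 a
    unfold addStrip
    by_cases h1 : ∃ i, X i = (a + 1, lam r (a + 1), r)
    · rcases hle.lt_or_eq with hlt | heq
      · rw [if_pos h1]; omega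
      · obtain ⟨i, hi⟩ := h1
        have hi1 := (hd i).1
        have hi2 := (hd i).2
        rw [hi] at hi1 hi2
        simp only [content] at hi1 hi2
        have hilt := i.2
        obtain ⟨g1, g2⟩ := hcl (p - (i : ℕ)) (by omega) (by omega)
          (by rw [← hi1]; exact ⟨hr, a, by push_cast at hi2; omega⟩)
        have hk : (i : ℕ) - 1 < e := by omega
        have hpos : p - (((i : ℕ) - 1 : ℕ) : ℤ) = p - (i : ℕ) + 1 := by omega
        have h2 : ∃ i', X i' = (a, lam r a, r) := by
          refine ⟨⟨(i : ℕ) - 1, hk⟩, box_ext (s := s) hlam (hX.2 _) ⟨hr, rfl⟩ ?_ ?_⟩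
          · rw [(hd ⟨(i : ℕ) - 1, hk⟩).1, hpos, g2, ← hi1]
          · rw [(hd ⟨(i : ℕ) - 1, hk⟩).2, hpos]
            simp only [content]
            push_cast at hi2
            omega
        rw [if_pos h2]
        split_ifs <;> omega
    · rw [if_neg h1]
      omega
  · obtain ⟨n, hn⟩ := (hlam r hr).2
    refine ⟨max n ((Finset.univ.sup fun i => (X i).1) + 1), fun a ha => ?_⟩
    have h0 := hn a (le_of_max_le_left ha)
    have ha' := le_of_max_le_right ha
    unfold addStrip
    rw [if_neg, h0]
    rintro ⟨i, hi⟩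
    have := Finset.le_sup (f := fun i => (X i).1) (Finset.mem_univ i)
    simp only [hi] at this
    omega

/-- Adding a strip moves its beads one position up. -/
lemma moved_addStrip {e ℓ : ℕ} {lam : ℕ → ℕ → ℕ} {s : ℕ → ℤ}
    (hlam : IsMultipartition ℓ lam) {X : Fin e → Box} (hX : IsStrip e ℓ lam s X)
    {p : ℤ} {j : ℤ → ℕ} (hd : Desc s X p j) :
    Moved (Bead ℓ lam s) (Bead ℓ (addStrip lam X) s) e p j := by
  have hmem : ∀ r a, r < ℓ → ((∃ i, X i = (a, lam r a, r)) ↔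
      (p - e + 1 ≤ (lam r a : ℤ) - a + s r ∧ (lam r a : ℤ) - a + s r ≤ p ∧
        j ((lam r a : ℤ) - a + s r) = r)) := by
    intro r a hr
    constructor
    · rintro ⟨i, hi⟩
      have hi1 := (hd i).1
      have hi2 := (hd i).2
      rw [hi] at hi1 hi2
      simp only [content] at hi1 hi2
      have := i.2
      refine ⟨by omega, by omega, ?_⟩
      rw [hi2, ← hi1]
    · rintro ⟨g1, g2, g3⟩
      obtain ⟨k, hk⟩ : ∃ k : ℕ, (lam r a : ℤ) - a + s r = p - k :=
        ⟨(p - ((lam r a : ℤ) - a + s r)).toNat, by omega⟩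
      have hke : k < e := by omega
      refine ⟨⟨k, hke⟩, box_ext (s := s) hlam (hX.2 _) ⟨hr, rfl⟩ ?_ ?_⟩
      · rw [(hd ⟨k, hke⟩).1, ← hk, g3]
      · rw [(hd ⟨k, hke⟩).2, ← hk]; rfl
  intro r x
  constructor
  · rintro ⟨hr, a, ha⟩
    unfold addStrip at ha
    by_cases g : ∃ i, X i = (a, lam r a, r)
    · right
      rw [if_pos g] at ha
      have hx : x - 1 = (lam r a : ℤ) - a + s r := by push_cast at ha; omega
      rw [hx]
      exact (hmem r a hr).1 g
    · left
      rw [if_neg g] at ha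
      have hx : x = (lam r a : ℤ) - a + s r := by push_cast at ha; omega
      subst hx
      exact ⟨⟨hr, a, rfl⟩, fun g' => g ((hmem r a hr).2 g')⟩
  · rintro (⟨⟨hr, a, rfl⟩, g⟩ | ⟨g1, g2, g3⟩)
    · refine ⟨hr, a, ?_⟩
      have g' := fun q => g ((hmem r a hr).1 q)
      unfold addStrip
      rw [if_neg g']
      push_cast; ring
    · obtain ⟨k, hk⟩ : ∃ k : ℕ, x - 1 = p - k := ⟨(p - (x - 1)).toNat, by omega⟩
      have hke : k < e := by omega
      have h1 := (hd ⟨k, hke⟩).1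
      have h2 := (hd ⟨k, hke⟩).2
      obtain ⟨w1, w2⟩ := hX.2 ⟨k, hke⟩
      have hr : (X ⟨k, hke⟩).2.2 = r := by rw [h1]; simp only; rw [← hk, g3]
      rw [hr] at w1 w2
      refine ⟨w1, (X ⟨k, hke⟩).1, ?_⟩
      have hex : ∃ i, X i = ((X ⟨k, hke⟩).1, lam r (X ⟨k, hke⟩).1, r) :=
        ⟨⟨k, hke⟩, Prod.ext rfl (Prod.ext w2 hr)⟩
      unfold addStrip
      rw [if_pos hex]
      simp only [content] at h2
      rw [hr, w2] at h2
      push_cast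
      omega

lemma AddFirstGood.isMultipartition {e ℓ : ℕ} (he : 2 ≤ e) {s : ℕ → ℤ} {lam mu : ℕ → ℕ → ℕ}
    (h : AddFirstGood e ℓ s lam mu) (hlam : IsMultipartition ℓ lam) : IsMultipartition ℓ mu := by
  obtain ⟨X, hX, rfl⟩ := h
  obtain ⟨p, j, hd, hg⟩ := good_of_firstGood he hX
  exact (isAddable_of_closed hlam hX.1 hd fun x hx hx' hb => hg.closed hx hx' hb).2

/-! ### Addability of the second good strip -/

/-- If `σ₁ ≥ 1` copies of the first good vertical `e`-strip have been added recursively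
(each addition being performed at the new first good strip position), then the second good
vertical `e`-strip of the resulting charged `ℓ`-partition is addable. -/
theorem secondGood_isAddable_after_adding_first (e ℓ : ℕ) (he : 2 ≤ e) (hl : 2 ≤ ℓ)
    (lam mu : ℕ → ℕ → ℕ) (s : ℕ → ℤ) (hlam : IsMultipartition ℓ lam)
    (hX₁ : ∃ X₁, IsFirstGood e ℓ lam s X₁) (hX₂ : ∃ X₂, IsSecondGood e ℓ lam s X₂)
    (hadd : Relation.TransGen (AddFirstGood e ℓ s) lam mu)
    (Y : Fin e → Box) (hY : IsSecondGood e ℓ mu s Y) :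
    IsAddable e ℓ mu Y := by
  -- The last addition, from `nu` to `mu`.
  obtain ⟨nu, hnu, X, hX, rfl⟩ : ∃ nu, IsMultipartition ℓ nu ∧ AddFirstGood e ℓ s nu mu := by
    induction hadd with
    | single h => exact ⟨_, hlam, h⟩
    | tail hab h ih =>
      refine ⟨_, ?_, h⟩
      clear h ih hY
      induction hab with
      | single h => exact h.isMultipartition he hlam
      | tail _ h ih => exact h.isMultipartition he ih
  have hmu : IsMultipartition ℓ (addStrip nu X) :=
    AddFirstGood.isMultipartition he ⟨X, hX, rfl⟩ hnu
  obtain ⟨p, j, hd, hg⟩ := good_of_firstGood he hX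
  have hM := moved_addStrip hnu hX.1 hd
  obtain ⟨X₁', hX₁', hYs, hdis, -, hmax⟩ := hY
  obtain ⟨p₁, j₁, hd₁, hg₁⟩ := good_of_firstGood he hX₁'
  obtain ⟨c, y, hdY, hcY⟩ := exists_desc he hYs
  have hdis' : ∀ z, c - e + 1 ≤ z → z ≤ c → p₁ - e + 1 ≤ z → z ≤ p₁ → y z ≠ j₁ z := by
    intro z h1 h2 h3 h4 heq
    obtain ⟨i, hi⟩ : ∃ i : ℕ, z = c - i := ⟨(c - z).toNat, by omega⟩
    obtain ⟨k, hk⟩ : ∃ k : ℕ, z = p₁ - k := ⟨(p₁ - z).toNat, by omega⟩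
    have hie : i < e := by omega
    have hke : k < e := by omega
    refine hdis ⟨i, hie⟩ ⟨k, hke⟩ (box_ext (s := s) hmu (hYs.2 _) (hX₁'.1.2 _) ?_ ?_)
    · rw [(hdY ⟨i, hie⟩).1, (hd₁ ⟨k, hke⟩).1]
      simp only
      rw [← hi, ← hk, heq]
    · rw [(hdY ⟨i, hie⟩).2, (hd₁ ⟨k, hke⟩).2]
      simp only
      rw [← hi, ← hk]
  have hmax' : ∀ a t, Chain (Bead ℓ (addStrip nu X) s) t a (a - e + 1) →
      (∀ z, a - e + 1 ≤ z → z ≤ a → p₁ - e + 1 ≤ z → z ≤ p₁ → t z ≠ j₁ z) →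
      a ≤ c ∧ (a = c → ∀ x, c - e + 1 ≤ x → x ≤ c → (∀ z, x < z → z ≤ c → t z = y z) →
        y x ≤ t x) := by
    intro a t ht htd
    obtain ⟨Z, hZ, hZd⟩ := exists_strip ht
    have hZdis : ∀ i i' : Fin e, Z i ≠ X₁' i' := by
      intro i i' heq
      obtain ⟨e1, e2⟩ := hZd i
      obtain ⟨e3, e4⟩ := hd₁ i'
      rw [heq, e3] at e1
      rw [heq, e4] at e2
      have := i.2
      have := i'.2
      refine htd (a - (i : ℕ)) (by omega) (by omega) (by omega) (by omega) ?_
      rw [← e1, e2]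
    have hne : Z ≠ X₁' := fun heq => hZdis ⟨0, by omega⟩ ⟨0, by omega⟩ (by rw [heq])
    exact lex_desc he hdY hZd (hmax Z hZ hZdis (hX₁'.2 Z hZ hne))
  refine isAddable_of_closed hmu hYs hdY fun x hx hxc hb => ?_
  by_contra hcon
  -- The box above the box of `Y` of content `x` cannot lie in the first good strip, so it could be
  -- substituted into `Y` to get a larger strip disjoint from the first good one.
  have hnot : p₁ - e + 1 ≤ x + 1 → y x ≠ j₁ (x + 1) := fun h1 h3 =>
    hg.not_below hM hg₁ hcY hdis' hxc h1 h3.symm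
  rcases eq_or_lt_of_le hxc with rfl | hlt
  · have := (hmax' (x + 1) (fun z => if z = x + 1 then y x else y z) ⟨?_, ?_⟩ ?_).1
    · omega
    · intro z hz hz'
      by_cases g : z = x + 1
      · simpa [g] using hb
      · simpa [g] using hcY.1 z (by omega) (by omega)
    · intro z hz hz'
      by_cases g : z = x
      · simp [g]
      · have g' : z ≠ x + 1 := by omega
        simpa [g, g'] using hcY.2 z (by omega) (by omega)
    · intro z hz hz' h1 h2
      by_cases g : z = x + 1
      · subst g; simpa using hnot h1
      · simpa [g] using hdis' z (by omega) (by omega) h1 h2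
  · have hle := hcY.2 x hx hlt
    have := (hmax' c (fun z => if z = x + 1 then y x else y z) ⟨?_, ?_⟩ ?_).2 rfl (x + 1)
      (by omega) (by omega) ?_
    · simp at this
      exact hcon ⟨by omega, by omega⟩
    · intro z hz hz'
      by_cases g : z = x + 1
      · simpa [g] using hb
      · simpa [g] using hcY.1 z (by omega) (by omega)
    · intro z hz hz'
      by_cases g : z = x + 1
      · have := hcY.2 z hz hz'
        subst g
        simp; omega
      · by_cases g' : z = x
        · simp [g']
        · simpa [g, g'] using hcY.2 z hz hz'
    · intro z hz hz' h1 h2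
      by_cases g : z = x + 1
      · subst g; simpa using hnot h1
      · simpa [g] using hdis' z hz hz' h1 h2
    · intro z hz hz'
      have g : z ≠ x + 1 := by omega
      simp [g]
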